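/- arXiv:2502.20856 — 4 statements merged into one kernel-verified Lean document; each statement's English description precedes it below -/
import Mathlib

section
/- Let c ∈ ℝ^K have all entries positive and suppose k ∈ I_+(c). Denote by e_k the k-th standard basis vector of ℝ^K. Then there exists δ₀ > 0 such that: for all δ with 0 < δ < δ₀, ν(c + δ e_k) = ν(c) + σ² δ / (|I_+(c)| + |I_0(c)|); and for all δ with −δ₀ < δ < 0, ν(c + δ e_k) = ν(c) + σ² δ / |I_+(c)|. -/
open Classical in
/-- The unique positive solution ν(c) of the water-filling equation
Σ_k max(ν − σ² c_k, 0) = P_T. -/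
noncomputable def waterLevel (K : ℕ) (σ2 PT : ℝ) (c : Fin K → ℝ) : ℝ :=
  if h : ∃ ν : ℝ, 0 < ν ∧ ∑ k : Fin K, max (ν - σ2 * c k) 0 = PT then h.choose else 0

/-- The water-filling power allocation p_k(c) = max(ν(c)/c_k − σ², 0). -/
noncomputable def wfPower (K : ℕ) (σ2 PT : ℝ) (c : Fin K → ℝ) (k : Fin K) : ℝ :=
  max (waterLevel K σ2 PT c / c k - σ2) 0

/-- The resulting sum rate R(c) = Σ_k log₂(1 + p_k(c)/σ²). -/
noncomputable def sumRate (K : ℕ) (σ2 PT : ℝ) (c : Fin K → ℝ) : ℝ :=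
  ∑ k : Fin K, Real.logb 2 (1 + wfPower K σ2 PT c k / σ2)

theorem wl_unique (K : ℕ) (σ2 PT : ℝ) (hPT : 0 < PT) (c : Fin K → ℝ) (x : ℝ) (hx : 0 < x)
    (h : ∑ k : Fin K, max (x - σ2 * c k) 0 = PT) : waterLevel K σ2 PT c = x := by
  have mono : ∀ a b : ℝ, a < b → ∑ k : Fin K, max (a - σ2 * c k) 0 = PT →
      ∑ k : Fin K, max (b - σ2 * c k) 0 = PT → False := by
    intro a b hab ha hb
    have hpos : 0 < ∑ k : Fin K, max (a - σ2 * c k) 0 := by rw [ha]; exact hPT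
    obtain ⟨i, -, hi⟩ := Finset.exists_lt_of_sum_lt (s := Finset.univ) (f := fun _ : Fin K => (0 : ℝ))
      (g := fun k => max (a - σ2 * c k) 0) (by simpa using hpos)
    have : ∑ k : Fin K, max (a - σ2 * c k) 0 < ∑ k : Fin K, max (b - σ2 * c k) 0 := by
      apply Finset.sum_lt_sum
      · intro j _
        exact max_le_max (by linarith) le_rfl
      · refine ⟨i, Finset.mem_univ _, ?_⟩
        have h1 : 0 < a - σ2 * c i := by
          rcases lt_max_iff.1 hi with h | h
          · exact h
          · exact absurd h (lt_irrefl _)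
        rw [max_eq_left h1.le, max_eq_left (by linarith)]
        linarith
    linarith
  have hex : ∃ ν : ℝ, 0 < ν ∧ ∑ k : Fin K, max (ν - σ2 * c k) 0 = PT := ⟨x, hx, h⟩
  unfold waterLevel
  rw [dif_pos hex]
  rcases lt_trichotomy hex.choose x with h1 | h1 | h1
  · exact (mono _ _ h1 hex.choose_spec.2 h).elim
  · exact h1
  · exact (mono _ _ h1 h hex.choose_spec.2).elim

theorem wl_spec (K : ℕ) (σ2 PT : ℝ) (c : Fin K → ℝ) (hp : 0 < waterLevel K σ2 PT c) :
    ∑ k : Fin K, max (waterLevel K σ2 PT c - σ2 * c k) 0 = PT := by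
  unfold waterLevel at hp ⊢
  split_ifs at hp ⊢ with h
  · exact h.choose_spec.2
  · exact absurd hp (lt_irrefl _)

theorem wl_pert (K : ℕ) (σ2 PT : ℝ) (hPT : 0 < PT) (c : Fin K → ℝ) (k : Fin K) (δ ε : ℝ)
    (S : Finset (Fin K)) (hkS : k ∈ S) (hp : 0 < waterLevel K σ2 PT c)
    (hk : σ2 * c k < waterLevel K σ2 PT c)
    (he : ∀ i, σ2 * c i ≠ waterLevel K σ2 PT c → ε < |waterLevel K σ2 PT c - σ2 * c i|)
    (hev : ε < waterLevel K σ2 PT c) (hd : 2 * |σ2 * δ| < ε)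
    (hS : ∀ i, i ∈ S → σ2 * c i < waterLevel K σ2 PT c ∨
      (σ2 * c i = waterLevel K σ2 PT c ∧ 0 ≤ σ2 * δ))
    (hS' : ∀ i, i ∉ S → waterLevel K σ2 PT c < σ2 * c i ∨
      (σ2 * c i = waterLevel K σ2 PT c ∧ σ2 * δ ≤ 0)) :
    waterLevel K σ2 PT (c + δ • (Pi.single k 1 : Fin K → ℝ))
      = waterLevel K σ2 PT c + σ2 * δ / (S.card : ℝ) := by
  have hsp := wl_spec K σ2 PT c hp
  set v := waterLevel K σ2 PT c with hv
  have hN : (1 : ℝ) ≤ S.card := by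
    exact_mod_cast Finset.card_pos.2 ⟨k, hkS⟩
  have hN0 : (0 : ℝ) < S.card := by linarith
  set t := σ2 * δ / (S.card : ℝ) with ht
  have htN : (S.card : ℝ) * t = σ2 * δ := by rw [ht]; field_simp
  have htabs : |t| ≤ |σ2 * δ| := by
    rw [ht, abs_div, abs_of_pos hN0]
    exact div_le_self (abs_nonneg _) hN
  have ht1 : 0 ≤ σ2 * δ → 0 ≤ t := fun h => div_nonneg h hN0.le
  have ht2 : σ2 * δ ≤ 0 → t ≤ 0 := fun h => div_nonpos_of_nonpos_of_nonneg h hN0.le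
  have hta := abs_le.1 htabs
  have hda := abs_le.1 (le_refl |σ2 * δ|)
  have hd0 := abs_nonneg (σ2 * δ)
  apply wl_unique K σ2 PT hPT
  · linarith
  · have key : ∀ i : Fin K, max (v + t - σ2 * (c + δ • (Pi.single k 1 : Fin K → ℝ)) i) 0
        = max (v - σ2 * c i) 0 + (if i ∈ S then t else 0) - (if i = k then σ2 * δ else 0) := by
      intro i
      by_cases hik : i = k
      · subst hik
        have h1 := he i hk.ne
        rw [abs_of_pos (by linarith)] at h1
        simp only [Pi.add_apply, Pi.smul_apply, Pi.single_eq_same, smul_eq_mul, mul_one, hkS,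
          if_true]
        rw [max_eq_left (by nlinarith), max_eq_left (by linarith)]
        ring
      · simp only [Pi.add_apply, Pi.smul_apply, Pi.single_eq_of_ne hik, smul_eq_mul, mul_zero,
          add_zero, hik, if_false, sub_zero]
        by_cases hiS : i ∈ S
        · simp only [hiS, if_true]
          rcases hS i hiS with h | ⟨h, h'⟩
          · have h1 := he i h.ne
            rw [abs_of_pos (by linarith)] at h1
            rw [max_eq_left (by linarith), max_eq_left (by linarith)]
            ring
          · have := ht1 h'
            rw [max_eq_left (by linarith), max_eq_left (by linarith)]
            ring
        · simp only [hiS, if_false, add_zero]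
          rcases hS' i hiS with h | ⟨h, h'⟩
          · have h1 := he i h.ne'
            rw [abs_of_neg (by linarith)] at h1
            rw [max_eq_right (by linarith), max_eq_right (by linarith)]
          · have := ht2 h'
            rw [max_eq_right (by linarith), max_eq_right (by linarith)]
    rw [Finset.sum_congr rfl (fun i _ => key i), Finset.sum_sub_distrib, Finset.sum_add_distrib,
      hsp]
    simp [htN]

/-- one-sided behaviour of the water level under a perturbation of an
active coordinate k ∈ I₊(c), where e_k is the k-th standard basis vector. -/
theorem stmt4 (K : ℕ) (hK : 1 ≤ K) (σ2 PT : ℝ) (hσ2 : 0 < σ2) (hPT : 0 < PT)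
    (c : Fin K → ℝ) (hc : ∀ k, 0 < c k) (k : Fin K)
    (hk : σ2 * c k < waterLevel K σ2 PT c) :
    ∃ δ₀ > (0 : ℝ),
      (∀ δ : ℝ, 0 < δ → δ < δ₀ →
        waterLevel K σ2 PT (c + δ • (Pi.single k 1 : Fin K → ℝ))
          = waterLevel K σ2 PT c + σ2 * δ /
              (((Finset.univ.filter (fun i : Fin K => σ2 * c i < waterLevel K σ2 PT c)).card : ℝ) +
               ((Finset.univ.filter (fun i : Fin K => waterLevel K σ2 PT c = σ2 * c i)).card : ℝ))) ∧
      (∀ δ : ℝ, -δ₀ < δ → δ < 0 →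
        waterLevel K σ2 PT (c + δ • (Pi.single k 1 : Fin K → ℝ))
          = waterLevel K σ2 PT c + σ2 * δ /
              ((Finset.univ.filter (fun i : Fin K => σ2 * c i < waterLevel K σ2 PT c)).card : ℝ)) := by
  have hp : 0 < waterLevel K σ2 PT c := lt_trans (mul_pos hσ2 (hc k)) hk
  obtain ⟨ε, hε, he, hev⟩ : ∃ ε > (0 : ℝ),
      (∀ i, σ2 * c i ≠ waterLevel K σ2 PT c → ε < |waterLevel K σ2 PT c - σ2 * c i|) ∧
      ε < waterLevel K σ2 PT c := by
    have h1 : ∀ᶠ ε in nhdsWithin (0 : ℝ) (Set.Ioi 0), ∀ i, σ2 * c i ≠ waterLevel K σ2 PT c →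
        ε < |waterLevel K σ2 PT c - σ2 * c i| := by
      rw [Filter.eventually_all]
      intro i
      by_cases h : σ2 * c i = waterLevel K σ2 PT c
      · exact Filter.Eventually.of_forall fun _ h' => absurd h h'
      · have : 0 < |waterLevel K σ2 PT c - σ2 * c i| :=
          abs_pos.2 (sub_ne_zero.2 (Ne.symm h))
        filter_upwards [nhdsWithin_le_nhds (Iio_mem_nhds this)] with e he _
        exact he
    obtain ⟨e, ⟨h2, h3⟩, h4⟩ := ((h1.and (nhdsWithin_le_nhds (Iio_mem_nhds hp))).and
      self_mem_nhdsWithin).exists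
    exact ⟨e, h4, h2, h3⟩
  have hb : ∀ δ : ℝ, |δ| < ε / (2 * σ2) → 2 * |σ2 * δ| < ε := by
    intro δ h
    rw [lt_div_iff₀ (by positivity)] at h
    rw [abs_mul, abs_of_pos hσ2]
    linarith
  refine ⟨ε / (2 * σ2), by positivity, ?_, ?_⟩
  · intro δ h0 h1
    have h2 := hb δ (by rwa [abs_of_pos h0])
    have h3 : 0 < σ2 * δ := mul_pos hσ2 h0
    have hdis : Disjoint
        (Finset.univ.filter (fun i : Fin K => σ2 * c i < waterLevel K σ2 PT c))
        (Finset.univ.filter (fun i : Fin K => waterLevel K σ2 PT c = σ2 * c i)) := by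
      rw [Finset.disjoint_filter]
      intro i _ h h'
      linarith
    rw [← Nat.cast_add, ← Finset.card_union_of_disjoint hdis]
    apply wl_pert K σ2 PT hPT c k δ ε _ _ hp hk he hev h2
    · intro i hi
      simp only [Finset.mem_union, Finset.mem_filter, Finset.mem_univ, true_and] at hi
      rcases hi with h | h
      · exact Or.inl h
      · exact Or.inr ⟨h.symm, h3.le⟩
    · intro i hi
      simp only [Finset.mem_union, Finset.mem_filter, Finset.mem_univ, true_and, not_or,
        not_lt] at hi
      exact Or.inl (lt_of_le_of_ne hi.1 hi.2)
    · simp [hk]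
  · intro δ h0 h1
    have h2 := hb δ (by rw [abs_of_neg h1]; linarith)
    have h3 : σ2 * δ < 0 := mul_neg_of_pos_of_neg hσ2 h1
    apply wl_pert K σ2 PT hPT c k δ ε _ _ hp hk he hev h2
    · intro i hi
      simp only [Finset.mem_filter, Finset.mem_univ, true_and] at hi
      exact Or.inl hi
    · intro i hi
      simp only [Finset.mem_filter, Finset.mem_univ, true_and, not_lt] at hi
      rcases hi.lt_or_eq with h | h
      · exact Or.inl h
      · exact Or.inr ⟨h.symm, h3.le⟩
    · simp [hk]
end

section
/- Fix an index n, a direction e ∈ ℝ², a matrix Ψ ∈ ℂ^{L×K}, and suppose C_H = Ψ^H Q Q^H Ψ ∈ ℂ^{K×K} is invertible. Let ξ_k ∈ ℂ^L be the k-th column of Ψ C_H^{-1}. Then for every k, the function t ↦ [(Ψ^H Q(t) Q(t)^H Ψ)^{-1}]_{kk} is differentiable at t = 0 with derivative q̃_n^H Diag(ξ_k) Λ^e Diag(ξ_k)^H q̃_n. -/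
open Matrix

/-- The field-response matrix of the antenna positions r with the n-th position
perturbed to r_n + t·e: entries Q(t)_{lm} = exp(j κ_l^T r_m(t)). -/
noncomputable def Qmat (L N : ℕ) (κ : Fin L → Fin 2 → ℝ) (r : Fin N → Fin 2 → ℝ)
    (n : Fin N) (e : Fin 2 → ℝ) (t : ℝ) : Matrix (Fin L) (Fin N) ℂ :=
  Matrix.of fun l m =>
    Complex.exp (Complex.I * ((κ l ⬝ᵥ (if m = n then r m + t • e else r m) : ℝ) : ℂ))

theorem stmt7_G (L N : ℕ) (κ : Fin L → Fin 2 → ℝ) (r : Fin N → Fin 2 → ℝ)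
    (n : Fin N) (e : Fin 2 → ℝ) (x y : Fin L) :
    HasDerivAt (fun t : ℝ => (Qmat L N κ r n e t * (Qmat L N κ r n e t)ᴴ) x y)
      (Complex.I * (((κ x - κ y) ⬝ᵥ e : ℝ) : ℂ) * (Qmat L N κ r n e 0 x n *
      star (Qmat L N κ r n e 0 y n))) 0 := by
  have hq : ∀ t m, Qmat L N κ r n e t x m * star (Qmat L N κ r n e t y m) =
      Complex.exp (Complex.I * (((κ x - κ y) ⬝ᵥ r m : ℝ) : ℂ) +
        (t : ℂ) * (if m = n then Complex.I * (((κ x - κ y) ⬝ᵥ e : ℝ) : ℂ) else 0)) := by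
    intro t m
    simp only [Qmat, Matrix.of_apply, Complex.star_def, ← Complex.exp_conj, ← Complex.exp_add,
      map_mul, Complex.conj_I, Complex.conj_ofReal]
    congr 1
    split_ifs
    · simp only [sub_dotProduct, dotProduct_add, dotProduct_smul, smul_eq_mul]
      push_cast
      ring
    · simp only [sub_dotProduct]
      push_cast
      ring
  simp only [Matrix.mul_apply, Matrix.conjTranspose_apply]
  have hs : Complex.I * (((κ x - κ y) ⬝ᵥ e : ℝ) : ℂ) * (Qmat L N κ r n e 0 x n *
      star (Qmat L N κ r n e 0 y n)) = ∑ m, (Qmat L N κ r n e 0 x m *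
      star (Qmat L N κ r n e 0 y m)) *
        (1 * (if m = n then Complex.I * (((κ x - κ y) ⬝ᵥ e : ℝ) : ℂ) else 0)) := by
    simp [mul_comm]
  rw [hs]
  refine HasDerivAt.fun_sum fun m _ => ?_
  simp only [hq]
  exact (((Complex.ofRealCLM.hasDerivAt (x := (0:ℝ))).mul_const _).const_add _).cexp

section
attribute [local instance] Matrix.linftyOpNormedRing Matrix.linftyOpNormedAlgebra

theorem stmt7_inv {K : ℕ} (A : ℝ → Matrix (Fin K) (Fin K) ℂ) (A' : Matrix (Fin K) (Fin K) ℂ)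
    (h : ∀ i j, HasDerivAt (fun t => A t i j) (A' i j) 0) (hu : IsUnit (A 0)) (a b : Fin K) :
    HasDerivAt (fun t => (A t)⁻¹ a b) (-((A 0)⁻¹ * A' * (A 0)⁻¹) a b) 0 := by
  have hA : HasDerivAt A A' 0 := by
    have h1 : A = fun t => ∑ i, ∑ j, (A t i j) • Matrix.single i j (1 : ℂ) := by
      funext t
      conv_lhs => rw [Matrix.matrix_eq_sum_single (A t)]
      simp
    have h2 : A' = ∑ i, ∑ j, (A' i j) • Matrix.single i j (1 : ℂ) := by
      conv_lhs => rw [Matrix.matrix_eq_sum_single A']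
      simp
    rw [h1, h2]
    exact HasDerivAt.fun_sum fun i _ => HasDerivAt.fun_sum fun j _ => (h i j).smul_const _
  obtain ⟨u, hu⟩ := hu
  have hi := hasFDerivAt_ringInverse (𝕜 := ℝ) u
  rw [hu] at hi
  have h3 := hi.comp_hasDerivAt (0 : ℝ) hA
  let φ : Matrix (Fin K) (Fin K) ℂ →ₗ[ℝ] ℂ := Matrix.entryLinearMap ℝ ℂ a b
  have h4 := (LinearMap.toContinuousLinearMap φ).hasFDerivAt.comp_hasDerivAt (0 : ℝ) h3
  have hinv : (↑u⁻¹ : Matrix (Fin K) (Fin K) ℂ) = (A 0)⁻¹ := by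
    rw [← hu, Matrix.coe_units_inv]
  simp only [Function.comp_def, ← Matrix.nonsing_inv_eq_ringInverse] at h4
  rw [← hinv]
  exact h4
end

/-- derivative at t = 0 of the k-th diagonal entry of
(Ψᴴ Q(t) Q(t)ᴴ Ψ)⁻¹ equals q̃_nᴴ Diag(ξ_k) Λᵉ Diag(ξ_k)ᴴ q̃_n,
where ξ_k is the k-th column of Ψ C_H⁻¹. -/
theorem stmt7 (L N K : ℕ) (κ : Fin L → Fin 2 → ℝ) (r : Fin N → Fin 2 → ℝ)
    (n : Fin N) (e : Fin 2 → ℝ) (Ψ : Matrix (Fin L) (Fin K) ℂ)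
    (hCH : IsUnit (Ψᴴ * (Qmat L N κ r n e 0 * (Qmat L N κ r n e 0)ᴴ) * Ψ)) :
    ∀ k : Fin K,
      HasDerivAt
        (fun t : ℝ => ((Ψᴴ * (Qmat L N κ r n e t * (Qmat L N κ r n e t)ᴴ) * Ψ)⁻¹) k k)
        (star (fun l => Qmat L N κ r n e 0 l n) ⬝ᵥ
          ((Matrix.diagonal
              (fun l => (Ψ * (Ψᴴ * (Qmat L N κ r n e 0 * (Qmat L N κ r n e 0)ᴴ) * Ψ)⁻¹) l k) *
            Matrix.of (fun i l : Fin L => Complex.I * (((κ i - κ l) ⬝ᵥ e : ℝ) : ℂ)) *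
            (Matrix.diagonal
              (fun l => (Ψ * (Ψᴴ * (Qmat L N κ r n e 0 * (Qmat L N κ r n e 0)ᴴ) * Ψ)⁻¹) l k))ᴴ) *ᵥ
            (fun l => Qmat L N κ r n e 0 l n))) 0 := by
  intro k
  set A : ℝ → Matrix (Fin K) (Fin K) ℂ :=
    fun t => Ψᴴ * (Qmat L N κ r n e t * (Qmat L N κ r n e t)ᴴ) * Ψ with hA
  have hAd : (A 0)ᴴ = A 0 := by
    simp [hA, Matrix.mul_assoc]
  set G' : Matrix (Fin L) (Fin L) ℂ := Matrix.of fun i l =>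
    Complex.I * (((κ i - κ l) ⬝ᵥ e : ℝ) : ℂ) * (Qmat L N κ r n e 0 i n *
      star (Qmat L N κ r n e 0 l n)) with hG'
  have h := stmt7_inv A (Ψᴴ * G' * Ψ) (fun i j => by
    have h1 : ∀ t, A t i j = ∑ y, ∑ x, star (Ψ x i) *
        (Qmat L N κ r n e t * (Qmat L N κ r n e t)ᴴ) x y * Ψ y j := by
      intro t
      simp only [hA]
      rw [Matrix.mul_apply]
      simp only [Matrix.mul_apply (M := Ψᴴ), Finset.sum_mul, Matrix.conjTranspose_apply]
    have h2 : (Ψᴴ * G' * Ψ) i j = ∑ y, ∑ x, star (Ψ x i) * G' x y * Ψ y j := by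
      rw [Matrix.mul_apply]
      simp only [Matrix.mul_apply (M := Ψᴴ), Finset.sum_mul, Matrix.conjTranspose_apply]
    rw [h2]
    simp only [h1]
    refine HasDerivAt.fun_sum fun y _ => HasDerivAt.fun_sum fun x _ => ?_
    exact ((stmt7_G L N κ r n e x y).const_mul _).mul_const _) hCH k k
  refine h.congr_deriv ?_
  have hX : ∀ B : Matrix (Fin K) (Fin K) ℂ, Bᴴ = B →
      -(B * (Ψᴴ * G' * Ψ) * B) k k =
      -∑ y, ∑ x, star ((Ψ * B) x k) * G' x y * (Ψ * B) y k := by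
    intro B hB
    have : B * (Ψᴴ * G' * Ψ) * B = (Ψ * B)ᴴ * G' * (Ψ * B) := by
      rw [Matrix.conjTranspose_mul, hB]; simp only [Matrix.mul_assoc]
    rw [this, Matrix.mul_apply]
    simp only [Matrix.mul_apply (M := (Ψ * B)ᴴ), Finset.sum_mul, Matrix.conjTranspose_apply]
  have hB : ((A 0)⁻¹)ᴴ = (A 0)⁻¹ := by rw [Matrix.conjTranspose_nonsing_inv, hAd]
  rw [hX _ hB]
  change _ = star (fun l => Qmat L N κ r n e 0 l n) ⬝ᵥ
          ((Matrix.diagonal (fun l => (Ψ * (A 0)⁻¹) l k) *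
            Matrix.of (fun i l : Fin L => Complex.I * (((κ i - κ l) ⬝ᵥ e : ℝ) : ℂ)) *
            (Matrix.diagonal (fun l => (Ψ * (A 0)⁻¹) l k))ᴴ) *ᵥ
            (fun l => Qmat L N κ r n e 0 l n))
  generalize Ψ * (A 0)⁻¹ = X
  simp only [dotProduct.eq_1 (star _), Matrix.mulVec, dotProduct.eq_1 (fun _ => _ ) (fun l => Qmat L N κ r n e 0 l n),
    Matrix.diagonal_conjTranspose, Matrix.mul_diagonal, Matrix.diagonal_mul, Matrix.of_apply, hG', Finset.mul_sum,
    ← Finset.sum_neg_distrib, Pi.star_apply]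
  refine Finset.sum_congr rfl fun y _ => Finset.sum_congr rfl fun x _ => ?_
  rw [sub_dotProduct, sub_dotProduct]
  push_cast
  ring
end

section
/- Let Q ∈ ℂ^{L×N}, let b_1, …, b_K ∈ ℝ^L have nonnegative entries, set G_i = Q^H Diag(b_i) Q, fix k ∈ {1,…,K}, and for ε ∈ ℝ^K define Y_k(ε) = I_N + Σ_{i≠k} ε_i G_i, D_k(ε) = Q Y_k(ε)^{-1} Q^H, and g_{k,l}(ε) = tr(ε_l G_l Y_k(ε)^{-1}) − 1. Let ε ∈ ℝ^K have nonnegative entries (so Y_k(ε) is Hermitian positive definite and invertible). Then each g_{k,l} is partially differentiable at ε in every coordinate, with ∂g_{k,l}/∂ε_k (ε) = 𝟙{l = k} · b_l^T diag(D_k(ε)), and for every i ≠ k, ∂g_{k,l}/∂ε_i (ε) = 𝟙{l = i} · b_l^T diag(D_k(ε)) − ε_l · b_i^T (D_k(ε) ⊙ D_k(ε)^T) b_l. -/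
open Matrix
open scoped ComplexOrder

/-- G_i = Qᴴ Diag(b_i) Q. -/
noncomputable def Gmat (L N K : ℕ) (Q : Matrix (Fin L) (Fin N) ℂ)
    (b : Fin K → Fin L → ℝ) (i : Fin K) : Matrix (Fin N) (Fin N) ℂ :=
  Qᴴ * Matrix.diagonal (fun l => (b i l : ℂ)) * Q

/-- Y_k(ε) = I_N + Σ_{i≠k} ε_i G_i. -/
noncomputable def Ymat (L N K : ℕ) (Q : Matrix (Fin L) (Fin N) ℂ)
    (b : Fin K → Fin L → ℝ) (k : Fin K) (ε : Fin K → ℝ) : Matrix (Fin N) (Fin N) ℂ :=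
  1 + ∑ i ∈ Finset.univ.erase k, ε i • Gmat L N K Q b i

/-- D_k(ε) = Q Y_k(ε)⁻¹ Qᴴ. -/
noncomputable def Dmat (L N K : ℕ) (Q : Matrix (Fin L) (Fin N) ℂ)
    (b : Fin K → Fin L → ℝ) (k : Fin K) (ε : Fin K → ℝ) : Matrix (Fin L) (Fin L) ℂ :=
  Q * (Ymat L N K Q b k ε)⁻¹ * Qᴴ

/-- g_{k,l}(ε) = tr(ε_l G_l Y_k(ε)⁻¹) − 1. -/
noncomputable def gfun (L N K : ℕ) (Q : Matrix (Fin L) (Fin N) ℂ)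
    (b : Fin K → Fin L → ℝ) (k l : Fin K) (ε : Fin K → ℝ) : ℂ :=
  Matrix.trace (ε l • Gmat L N K Q b l * (Ymat L N K Q b k ε)⁻¹) - 1

section aux
attribute [local instance] Matrix.linftyOpNormedRing Matrix.linftyOpNormedAlgebra

theorem aux_deriv {N : ℕ} (A G Y : Matrix (Fin N) (Fin N) ℂ) (hY : IsUnit Y) (c : ℝ) :
    HasDerivAt (fun t : ℝ => Matrix.trace (A * (Y + (t - c) • G)⁻¹))
      (-Matrix.trace (A * (Y⁻¹ * G * Y⁻¹))) c := by
  obtain ⟨u, rfl⟩ := hY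
  have h1 : HasDerivAt (fun t : ℝ => (u : Matrix (Fin N) (Fin N) ℂ) + (t - c) • G) G c := by
    have := (((hasDerivAt_id c).sub_const c).smul_const G).const_add
      (u : Matrix (Fin N) (Fin N) ℂ)
    exact this.congr_deriv (one_smul _ _)
  have h2 := hasFDerivAt_ringInverse (𝕜 := ℝ) u
  have h2' : HasFDerivAt (𝕜 := ℝ) Ring.inverse
      (-ContinuousLinearMap.mulLeftRight ℝ (Matrix (Fin N) (Fin N) ℂ) ↑u⁻¹ ↑u⁻¹)
      ((u : Matrix (Fin N) (Fin N) ℂ) + (c - c) • G) := by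
    simpa using h2
  have h3 := h2'.comp_hasDerivAt c h1
  let T : Matrix (Fin N) (Fin N) ℂ →ₗ[ℝ] ℂ :=
    (Matrix.traceLinearMap (Fin N) ℝ ℂ) ∘ₗ (LinearMap.mulLeft ℝ A)
  have h4 := (LinearMap.toContinuousLinearMap T).hasFDerivAt.comp_hasDerivAt c h3
  have e : ((u⁻¹ : (Matrix (Fin N) (Fin N) ℂ)ˣ) : Matrix (Fin N) (Fin N) ℂ) = (u : Matrix (Fin N) (Fin N) ℂ)⁻¹ :=
    Matrix.coe_units_inv u
  refine (h4.congr_deriv ?_).congr_of_eventuallyEq ?_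
  · change T (-((u⁻¹ : (Matrix (Fin N) (Fin N) ℂ)ˣ) * G * (u⁻¹ : (Matrix (Fin N) (Fin N) ℂ)ˣ))) = _
    simp [T, e]
  · refine Filter.Eventually.of_forall fun t => ?_
    simp [T, Matrix.nonsing_inv_eq_ringInverse]
end aux

theorem aux_tr1 (L N K : ℕ) (Q : Matrix (Fin L) (Fin N) ℂ)
    (b : Fin K → Fin L → ℝ) (k l : Fin K) (ε : Fin K → ℝ) :
    Matrix.trace (Gmat L N K Q b l * (Ymat L N K Q b k ε)⁻¹) =
      ∑ j : Fin L, (b l j : ℂ) * Dmat L N K Q b k ε j j := by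
  have : Matrix.trace (Gmat L N K Q b l * (Ymat L N K Q b k ε)⁻¹) =
      Matrix.trace (Matrix.diagonal (fun j => (b l j : ℂ)) * Dmat L N K Q b k ε) := by
    unfold Gmat Dmat
    rw [Matrix.mul_assoc, Matrix.mul_assoc, Matrix.trace_mul_comm]
    simp only [Matrix.mul_assoc]
  rw [this]
  simp [Matrix.trace, Matrix.diagonal_mul]

theorem aux_tr2 (L N K : ℕ) (Q : Matrix (Fin L) (Fin N) ℂ)
    (b : Fin K → Fin L → ℝ) (k l i : Fin K) (ε : Fin K → ℝ) :
    Matrix.trace (Gmat L N K Q b l * ((Ymat L N K Q b k ε)⁻¹ * Gmat L N K Q b i *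
        (Ymat L N K Q b k ε)⁻¹)) =
      ((fun j => (b i j : ℂ)) ⬝ᵥ
              (Matrix.hadamard (Dmat L N K Q b k ε) (Dmat L N K Q b k ε)ᵀ *ᵥ
                fun j => (b l j : ℂ))) := by
  have : Matrix.trace (Gmat L N K Q b l * ((Ymat L N K Q b k ε)⁻¹ * Gmat L N K Q b i *
        (Ymat L N K Q b k ε)⁻¹)) =
      Matrix.trace ((Matrix.diagonal (fun j => (b l j : ℂ)) * Dmat L N K Q b k ε) *
        (Matrix.diagonal (fun j => (b i j : ℂ)) * Dmat L N K Q b k ε)) := by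
    unfold Gmat Dmat
    rw [Matrix.mul_assoc, Matrix.mul_assoc, Matrix.trace_mul_comm]
    simp only [Matrix.mul_assoc]
  rw [this, Matrix.trace_mul_comm]
  simp only [Matrix.trace, Matrix.diag_apply, Matrix.mul_apply (M := Matrix.diagonal _ * _), Matrix.diagonal_mul, dotProduct,
    Matrix.mulVec, Matrix.hadamard_apply, Matrix.transpose_apply, Finset.mul_sum]
  refine Finset.sum_congr rfl fun x _ => Finset.sum_congr rfl fun y _ => ?_
  ring

theorem aux_upd_k (L N K : ℕ) (Q : Matrix (Fin L) (Fin N) ℂ)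
    (b : Fin K → Fin L → ℝ) (k : Fin K) (ε : Fin K → ℝ) (t : ℝ) :
    Ymat L N K Q b k (Function.update ε k t) = Ymat L N K Q b k ε := by
  unfold Ymat
  congr 1
  refine Finset.sum_congr rfl fun x hx => ?_
  rw [Function.update_of_ne (Finset.ne_of_mem_erase hx)]

theorem aux_upd_i (L N K : ℕ) (Q : Matrix (Fin L) (Fin N) ℂ)
    (b : Fin K → Fin L → ℝ) (k i : Fin K) (hi : i ≠ k) (ε : Fin K → ℝ) (t : ℝ) :
    Ymat L N K Q b k (Function.update ε i t) =
      Ymat L N K Q b k ε + (t - ε i) • Gmat L N K Q b i := by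
  unfold Ymat
  have hm : i ∈ Finset.univ.erase k := by simp [hi]
  rw [← Finset.add_sum_erase _ _ hm, ← Finset.add_sum_erase _ _ hm]
  have : ∑ x ∈ (Finset.univ.erase k).erase i, Function.update ε i t x • Gmat L N K Q b x =
      ∑ x ∈ (Finset.univ.erase k).erase i, ε x • Gmat L N K Q b x := by
    refine Finset.sum_congr rfl fun x hx => ?_
    rw [Function.update_of_ne (Finset.ne_of_mem_erase hx)]
  rw [this, Function.update_self, sub_smul]
  abel

theorem aux_pd (L N K : ℕ) (Q : Matrix (Fin L) (Fin N) ℂ)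
    (b : Fin K → Fin L → ℝ) (hb : ∀ i l, 0 ≤ b i l)
    (k : Fin K) (ε : Fin K → ℝ) (hε : ∀ i, 0 ≤ ε i) :
    (Ymat L N K Q b k ε).PosDef := by
  unfold Ymat
  refine Matrix.PosDef.one.add_posSemidef ?_
  refine Matrix.posSemidef_sum _ fun i _ => ?_
  refine Matrix.PosSemidef.smul ?_ (hε i)
  unfold Gmat
  refine Matrix.PosSemidef.conjTranspose_mul_mul_same ?_ Q
  refine Matrix.PosSemidef.diagonal fun j => ?_
  simpa using hb i j

/-- Y_k(ε) is Hermitian positive definite for ε ≥ 0, and the partial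
derivatives of g_{k,l} are
∂g_{k,l}/∂ε_k = 𝟙{l=k}·b_lᵀ diag(D_k), and for i ≠ k,
∂g_{k,l}/∂ε_i = 𝟙{l=i}·b_lᵀ diag(D_k) − ε_l·b_iᵀ (D_k ⊙ D_kᵀ) b_l. -/
theorem stmt12 (L N K : ℕ) (Q : Matrix (Fin L) (Fin N) ℂ)
    (b : Fin K → Fin L → ℝ) (hb : ∀ i l, 0 ≤ b i l)
    (k : Fin K) (ε : Fin K → ℝ) (hε : ∀ i, 0 ≤ ε i) :
    (Ymat L N K Q b k ε).PosDef ∧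
    (∀ l : Fin K,
      HasDerivAt (fun t : ℝ => gfun L N K Q b k l (Function.update ε k t))
        ((if l = k then (1 : ℂ) else 0) *
          ∑ j : Fin L, (b l j : ℂ) * Dmat L N K Q b k ε j j) (ε k)) ∧
    (∀ i : Fin K, i ≠ k → ∀ l : Fin K,
      HasDerivAt (fun t : ℝ => gfun L N K Q b k l (Function.update ε i t))
        ((if l = i then (1 : ℂ) else 0) *
            (∑ j : Fin L, (b l j : ℂ) * Dmat L N K Q b k ε j j) -
          (ε l : ℂ) *
            ((fun j => (b i j : ℂ)) ⬝ᵥ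
              (Matrix.hadamard (Dmat L N K Q b k ε) (Dmat L N K Q b k ε)ᵀ *ᵥ
                fun j => (b l j : ℂ)))) (ε i)) := by
  refine ⟨aux_pd L N K Q b hb k ε hε, fun l => ?_, fun i hi l => ?_⟩
  · have e : (fun t : ℝ => gfun L N K Q b k l (Function.update ε k t)) =
        fun t : ℝ => (Function.update ε k t l) •
          (∑ j : Fin L, (b l j : ℂ) * Dmat L N K Q b k ε j j) - 1 := by
      funext t
      simp only [gfun, aux_upd_k, Matrix.smul_mul, Matrix.trace_smul, aux_tr1]
    rw [e]
    by_cases h : l = k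
    · subst h
      simpa using ((hasDerivAt_id (ε l)).smul_const
        (∑ j : Fin L, (b l j : ℂ) * Dmat L N K Q b l ε j j)).sub_const 1
    · simpa [h] using hasDerivAt_const (ε k) (ε l •
          (∑ j : Fin L, (b l j : ℂ) * Dmat L N K Q b k ε j j) - 1)
  · have h1 := aux_deriv (Gmat L N K Q b l) (Gmat L N K Q b i) (Ymat L N K Q b k ε)
      (aux_pd L N K Q b hb k ε hε).isUnit (ε i)
    rw [aux_tr2] at h1
    have e : (fun t : ℝ => gfun L N K Q b k l (Function.update ε i t)) =
        fun t : ℝ => (Function.update ε i t l) • Matrix.trace (Gmat L N K Q b l *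
          (Ymat L N K Q b k ε + (t - ε i) • Gmat L N K Q b i)⁻¹) - 1 := by
      funext t
      simp only [gfun, aux_upd_i L N K Q b k i hi, Matrix.smul_mul, Matrix.trace_smul]
    rw [e]
    have h0 : HasDerivAt (fun t : ℝ => Function.update ε i t l) (if l = i then 1 else 0) (ε i) := by
      by_cases h : l = i
      · subst h
        simpa using hasDerivAt_id' (ε l)
      · simpa [h] using hasDerivAt_const (ε i) (ε l)
    refine ((h0.smul h1).sub_const 1).congr_deriv ?_
    simp only [sub_self, zero_smul, add_zero, aux_tr1, Function.update_eq_self]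
    split_ifs <;> simp <;> ring
end

section
/- Let G_1, …, G_K ∈ ℂ^{N×N} be Hermitian positive definite matrices and fix k ∈ {1,…,K}. Then there is at most one vector ε ∈ ℝ^K with all entries strictly positive such that for every l ∈ {1,…,K}, ε_l · tr(G_l (I_N + Σ_{i≠k} ε_i G_i)^{-1}) = 1. -/
open Matrix
open scoped ComplexOrder

open scoped MatrixOrder Matrix.Norms.L2Operator in
lemma aux_trace_mul_pos {N : ℕ} [Nonempty (Fin N)] {G D : Matrix (Fin N) (Fin N) ℂ}
    (hG : G.PosDef) (hD : D.PosDef) : 0 < Matrix.trace (G * D) := by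
  obtain ⟨C, hC, rfl⟩ : ∃ C : Matrix (Fin N) (Fin N) ℂ, IsUnit C ∧ G = Cᴴ * C := by
    obtain ⟨C, hC⟩ := CStarAlgebra.nonneg_iff_eq_star_mul_self.mp hG.posSemidef.nonneg
    refine ⟨C, ?_, hC⟩
    have h := hG.isUnit
    rw [hC] at h
    exact isUnit_of_mul_isUnit_right h
  rw [Matrix.mul_assoc, Matrix.trace_mul_comm]
  refine Matrix.PosDef.trace_pos ?_
  exact (Matrix.IsUnit.posDef_star_right_conjugate_iff hC).2 hD

lemma aux_trace_inv_lt {N : ℕ} [Nonempty (Fin N)] {G A P : Matrix (Fin N) (Fin N) ℂ}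
    (hG : G.PosDef) (hA : A.PosDef) (hP : P.PosDef) :
    Matrix.trace (G * (A + P)⁻¹) < Matrix.trace (G * A⁻¹) := by
  have hB : (A + P).PosDef := hA.add hP
  obtain ⟨B, hBd⟩ : ∃ B, B = A + P := ⟨_, rfl⟩
  have hPe : P = B - A := by rw [hBd]; abel
  rw [← hBd] at hB ⊢
  have hBdet := (Matrix.isUnit_iff_isUnit_det _).1 hB.isUnit
  have hAdet := (Matrix.isUnit_iff_isUnit_det _).1 hA.isUnit
  have h1 : A⁻¹ - B⁻¹ = B⁻¹ * P * B⁻¹ + B⁻¹ * P * A⁻¹ * P * B⁻¹ := by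
    have e1 : B⁻¹ * P = 1 - B⁻¹ * A := by
      rw [hPe, Matrix.mul_sub, Matrix.nonsing_inv_mul _ hBdet]
    have e2 : P * B⁻¹ = 1 - A * B⁻¹ := by
      rw [hPe, Matrix.sub_mul, Matrix.mul_nonsing_inv _ hBdet]
    rw [Matrix.mul_assoc (B⁻¹ * P * A⁻¹) P, Matrix.mul_assoc B⁻¹ P B⁻¹, e2, e1]
    have e3 : (1 - B⁻¹ * A) * A⁻¹ = A⁻¹ - B⁻¹ := by
      rw [Matrix.sub_mul, Matrix.mul_assoc, Matrix.mul_nonsing_inv _ hAdet]; simp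
    rw [e3, Matrix.sub_mul, Matrix.mul_sub, Matrix.mul_sub, ← Matrix.mul_assoc A⁻¹,
      Matrix.nonsing_inv_mul _ hAdet]
    simp
  have hBi := hB.inv
  have hBu : IsUnit B⁻¹ := hBi.isUnit
  have hBs : star B⁻¹ = B⁻¹ := hBi.isHermitian
  have hPs : star P = P := hP.isHermitian
  have p1 : (B⁻¹ * P * B⁻¹).PosDef := by
    have := (Matrix.IsUnit.posDef_star_right_conjugate_iff hBu).2 hP
    rwa [hBs] at this
  have p2 : (B⁻¹ * P * A⁻¹ * P * B⁻¹).PosDef := by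
    have := (Matrix.IsUnit.posDef_star_right_conjugate_iff (hBu.mul hP.isUnit)).2 hA.inv
    rw [star_mul, hBs, hPs] at this
    simpa only [Matrix.mul_assoc] using this
  have h2 := aux_trace_mul_pos hG (p1.add p2)
  rw [← h1, Matrix.mul_sub, Matrix.trace_sub] at h2
  exact sub_pos.1 h2

lemma aux_posSemidef_sum {N K : ℕ} (G : Fin K → Matrix (Fin N) (Fin N) ℂ)
    (hG : ∀ i, (G i).PosDef) (s : Finset (Fin K)) (c : Fin K → ℝ) (hc : ∀ i, 0 ≤ c i) :
    (∑ i ∈ s, c i • G i).PosSemidef :=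
  Matrix.posSemidef_sum _ fun i _ => (hG i).posSemidef.smul (hc i)

lemma aux_le (N K : ℕ) (G : Fin K → Matrix (Fin N) (Fin N) ℂ)
    (hG : ∀ i, (G i).PosDef) (k : Fin K) (ε ε' : Fin K → ℝ)
    (h : ∀ l, 0 < ε l)
    (he : ∀ l : Fin K, (ε l : ℂ) *
          Matrix.trace (G l * (1 + ∑ i ∈ Finset.univ.erase k, ε i • G i)⁻¹) = 1)
    (h' : ∀ l, 0 < ε' l)
    (he' : ∀ l : Fin K, (ε' l : ℂ) *
          Matrix.trace (G l * (1 + ∑ i ∈ Finset.univ.erase k, ε' i • G i)⁻¹) = 1) :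
    ∀ l, ε' l ≤ ε l := by
  intro l₁
  by_contra! hl
  have hN : Nonempty (Fin N) := by
    by_contra hN
    rw [not_nonempty_iff] at hN
    have := he k
    simp [Matrix.trace] at this
  obtain ⟨l, -, hmax⟩ := Finset.exists_max_image Finset.univ (fun i => ε' i / ε i) ⟨k, by simp⟩
  obtain ⟨a, ha⟩ : ∃ a, a = ε' l / ε l := ⟨_, rfl⟩
  have hal : ε' l = a * ε l := by rw [ha, div_mul_cancel₀ _ (h l).ne']
  have ham : ∀ i, ε' i ≤ a * ε i := fun i => by
    have := hmax i (by simp)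
    rw [← ha] at this
    exact (div_le_iff₀ (h i)).1 this
  have ha1 : 1 < a := by
    have := ham l₁
    by_contra! h3
    nlinarith [h l₁]
  have ha0 : 0 < a := by linarith
  have hA' : (1 + ∑ i ∈ Finset.univ.erase k, ε' i • G i).PosDef :=
    Matrix.PosDef.one.add_posSemidef (aux_posSemidef_sum G hG _ _ fun i => (h' i).le)
  have hA : (1 + ∑ i ∈ Finset.univ.erase k, ε i • G i).PosDef :=
    Matrix.PosDef.one.add_posSemidef (aux_posSemidef_sum G hG _ _ fun i => (h i).le)
  have hP : ((a - 1) • (1 : Matrix (Fin N) (Fin N) ℂ)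
      + ∑ i ∈ Finset.univ.erase k, (a * ε i - ε' i) • G i).PosDef :=
    (Matrix.PosDef.one.smul (sub_pos.2 ha1)).add_posSemidef
      (aux_posSemidef_sum G hG _ _ fun i => sub_nonneg.2 (ham i))
  have key := aux_trace_inv_lt (hG l) hA' hP
  have hsum : (1 + ∑ i ∈ Finset.univ.erase k, ε' i • G i) +
      ((a - 1) • (1 : Matrix (Fin N) (Fin N) ℂ)
      + ∑ i ∈ Finset.univ.erase k, (a * ε i - ε' i) • G i)
      = (a : ℂ) • (1 + ∑ i ∈ Finset.univ.erase k, ε i • G i) := by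
    rw [Complex.coe_smul]
    simp only [sub_smul, Finset.sum_sub_distrib, smul_add, Finset.smul_sum, mul_smul, one_smul]
    abel
  have hac : (a : ℂ) ≠ 0 := by exact_mod_cast ha0.ne'
  have hinv : ((a : ℂ) • (1 + ∑ i ∈ Finset.univ.erase k, ε i • G i))⁻¹
      = (a : ℂ)⁻¹ • (1 + ∑ i ∈ Finset.univ.erase k, ε i • G i)⁻¹ := by
    apply Matrix.inv_eq_left_inv
    rw [Matrix.smul_mul, Matrix.mul_smul, smul_smul, inv_mul_cancel₀ hac, one_smul,
      Matrix.nonsing_inv_mul _ ((Matrix.isUnit_iff_isUnit_det _).1 hA.isUnit)]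
  rw [hsum, hinv, Matrix.mul_smul, Matrix.trace_smul, smul_eq_mul] at key
  have e1 := he l
  have e2 := he' l
  have hel : (ε l : ℂ) ≠ 0 := by exact_mod_cast (h l).ne'
  rw [hal] at e2
  push_cast at e2
  refine key.ne ?_
  apply mul_left_cancel₀ (mul_ne_zero hac hel)
  rw [e2, ← e1]
  field_simp

/-- uniqueness of the strictly positive solution of the fixed-point
system ε_l · tr(G_l (I_N + Σ_{i≠k} ε_i G_i)⁻¹) = 1, l = 1,…,K, for Hermitian
positive definite G_1, …, G_K. -/
theorem stmt14 (N K : ℕ) (G : Fin K → Matrix (Fin N) (Fin N) ℂ)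
    (hG : ∀ i, (G i).PosDef) (k : Fin K) :
    ∀ ε ε' : Fin K → ℝ,
      ((∀ l, 0 < ε l) ∧
        (∀ l : Fin K, (ε l : ℂ) *
          Matrix.trace (G l * (1 + ∑ i ∈ Finset.univ.erase k, ε i • G i)⁻¹) = 1)) →
      ((∀ l, 0 < ε' l) ∧
        (∀ l : Fin K, (ε' l : ℂ) *
          Matrix.trace (G l * (1 + ∑ i ∈ Finset.univ.erase k, ε' i • G i)⁻¹) = 1)) →
      ε = ε' := by
  rintro ε ε' ⟨h, he⟩ ⟨h', he'⟩
  funext l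
  exact le_antisymm (aux_le N K G hG k ε' ε h' he' h he l) (aux_le N K G hG k ε ε' h he h' he' l)
end
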